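/- arXiv:2202.08534 — 4 statements merged into one kernel-verified Lean document; each statement's English description precedes it below -/
import Mathlib

section
/- Let (x₀,x₁,p₀,p₁) : I → (0,∞) × ℝ × ℝ² be a solution of Hamilton's equations for the isosceles three-body Hamiltonian with outer mass m > 0. Define (r, ψ, v, w) by the blowup formulas and reparametrize time by dt/dτ = r^{3/2}. Then, as functions of the new time τ, the blowup variables satisfy dr/dτ = r v, dv/dτ = w² + v²/2 + V̄(ψ), dψ/dτ = w, and dw/dτ = −(1/2) v w − V̄′(ψ), where V̄(ψ) = −1/(√2 cos ψ) − 4m/√(2cos²ψ + (2(2+m)/m) sin²ψ). -/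
open Filter Set Topology

/-- Reduced mass `M₀ = 1/2` of the binary. -/
noncomputable def M0 : ℝ := 1/2

/-- Reduced mass `M₁ = 2m/(m+2)` of the outer body relative to the binary. -/
noncomputable def M1 (m : ℝ) : ℝ := 2*m/(m+2)

/-- The potential of the isosceles three-body problem with outer mass `m`. -/
noncomputable def i3bpPot (m x0 x1 : ℝ) : ℝ :=
  -1/x0 - 2*m/Real.sqrt (x1^2 + x0^2/4)

/-- `(x0, x1, p0, p1)` solves Hamilton's equations for the isosceles three-body
Hamiltonian `H = p₀²/(2M₀) + p₁²/(2M₁) + pot` on the set `s`. -/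
def IsI3BPSolutionOn (m : ℝ) (x0 x1 p0 p1 : ℝ → ℝ) (s : Set ℝ) : Prop :=
  ∀ t ∈ s,
    HasDerivAt x0 (p0 t / M0) t ∧
    HasDerivAt x1 (p1 t / M1 m) t ∧
    HasDerivAt p0 (-(deriv (fun y => i3bpPot m y (x1 t)) (x0 t))) t ∧
    HasDerivAt p1 (-(deriv (fun y => i3bpPot m (x0 t) y) (x1 t))) t

/-- The rescaled potential `V̄` of the isosceles three-body problem. -/
noncomputable def Vbar (m ψ : ℝ) : ℝ :=
  -1/(Real.sqrt 2 * Real.cos ψ)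
    - 4*m/Real.sqrt (2*Real.cos ψ^2 + (2*(2+m)/m)*Real.sin ψ^2)

/-- Blowup coordinate `r`. -/
noncomputable def bR (m x0 x1 : ℝ) : ℝ := Real.sqrt (M0*x0^2 + M1 m*x1^2)

/-- Blowup coordinate `ψ`. -/
noncomputable def bPsi (m x0 x1 : ℝ) : ℝ :=
  Real.arctan (Real.sqrt (M1 m) * x1 / (Real.sqrt M0 * x0))

/-- Blowup coordinate `v`. -/
noncomputable def bV (m x0 x1 p0 p1 : ℝ) : ℝ :=
  (bR m x0 x1) ^ (-(1:ℝ)/2) * (x0*p0 + x1*p1)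

/-- Blowup coordinate `w`. -/
noncomputable def bW (m x0 x1 p0 p1 : ℝ) : ℝ :=
  (bR m x0 x1) ^ (-(1:ℝ)/2) *
    (Real.sqrt (M0 / M1 m) * x0 * p1 - Real.sqrt (M1 m / M0) * x1 * p0)


lemma aux_rpow_neg_half {r : ℝ} (hr : 0 ≤ r) : r ^ (-(1:ℝ)/2) = 1 / Real.sqrt r := by
  rw [Real.sqrt_eq_rpow, show (-(1:ℝ)/2) = -(1/2) by norm_num, Real.rpow_neg hr]
  exact (one_div _).symm

lemma aux_rpow_three_half {r : ℝ} (hr : 0 ≤ r) : r ^ ((3:ℝ)/2) = Real.sqrt r ^ 3 := by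
  rw [Real.sqrt_eq_rpow, ← Real.rpow_natCast, ← Real.rpow_mul hr]
  norm_num

lemma aux_pot0 (m x0 x1 : ℝ) (h : 0 < x0) :
    HasDerivAt (fun y => i3bpPot m y x1)
      (1/x0^2 + 2*m*(x0/4)/Real.sqrt (x1^2 + x0^2/4)^3) x0 := by
  have hD : 0 < x1^2 + x0^2/4 := by positivity
  have hS : 0 < Real.sqrt (x1^2 + x0^2/4) := Real.sqrt_pos.2 hD
  have h1 : HasDerivAt (fun y : ℝ => x1^2 + y^2/4) (x0/2) x0 := by
    have := (((hasDerivAt_id x0).pow 2).div_const 4).const_add (x1^2)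
    refine this.congr_deriv ?_
    simp; ring
  have h2 := (h1.sqrt hD.ne')
  have h3 := ((hasDerivAt_id x0).fun_inv h.ne').const_mul (-1)
  have h4 := (h2.fun_inv hS.ne').const_mul (2*m)
  have h5 := h3.sub h4
  refine (h5.congr_deriv ?_)
  simp only [id]
  field_simp
  ring

lemma aux_pot1 (m x0 x1 : ℝ) (h : 0 < x0) :
    HasDerivAt (fun y => i3bpPot m x0 y)
      (2*m*x1/Real.sqrt (x1^2 + x0^2/4)^3) x1 := by
  have hD : 0 < x1^2 + x0^2/4 := by positivity
  have hS : 0 < Real.sqrt (x1^2 + x0^2/4) := Real.sqrt_pos.2 hD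
  have h1 : HasDerivAt (fun y : ℝ => y^2 + x0^2/4) (2*x1) x1 := by
    have := ((hasDerivAt_id x1).pow 2).add_const (x0^2/4)
    refine this.congr_deriv ?_
    simp
  have h2 := (h1.sqrt hD.ne')
  have h4 := (h2.fun_inv hS.ne').const_mul (2*m)
  have h5 := h4.const_sub (-1/x0)
  refine (h5.congr_deriv ?_)
  field_simp

lemma aux_Vbar (m ψ : ℝ) (hm : 0 < m) (hc : 0 < Real.cos ψ) :
    HasDerivAt (Vbar m)
      (-Real.sin ψ/(Real.sqrt 2 * Real.cos ψ^2)
        + 4*m*((2*(2+m)/m) - 2)*Real.sin ψ*Real.cos ψ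
          /Real.sqrt (2*Real.cos ψ^2 + (2*(2+m)/m)*Real.sin ψ^2)^3) ψ := by
  have hD : 0 < 2*Real.cos ψ^2 + (2*(2+m)/m)*Real.sin ψ^2 := by positivity
  have hS := Real.sqrt_pos.2 hD
  have hs2 : 0 < Real.sqrt 2 := by positivity
  have h1 : HasDerivAt (fun y : ℝ => 2*Real.cos y^2 + (2*(2+m)/m)*Real.sin y^2)
      (2*((2*(2+m)/m) - 2)*Real.sin ψ*Real.cos ψ) ψ := by
    have := (((Real.hasDerivAt_cos ψ).pow 2).const_mul 2).add
      (((Real.hasDerivAt_sin ψ).pow 2).const_mul (2*(2+m)/m))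
    refine this.congr_deriv ?_
    simp; ring
  have h2 := (h1.sqrt hD.ne')
  have h4 := (h2.fun_inv hS.ne').const_mul (4*m)
  have h3 := (((Real.hasDerivAt_cos ψ).const_mul (Real.sqrt 2)).fun_inv
    (mul_pos hs2 hc).ne').const_mul (-1)
  have h5 := h3.sub h4
  refine (h5.congr_deriv ?_)
  generalize Real.sqrt (2*Real.cos ψ^2 + (2*(2+m)/m)*Real.sin ψ^2) = E at *
  field_simp
  ring

lemma aux_main (m : ℝ) (hm : 0 < m) (x0 x1 p0 p1 tof : ℝ → ℝ) (τ : ℝ)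
    (hpos : 0 < x0 (tof τ))
    (hx0 : HasDerivAt x0 (p0 (tof τ) / M0) (tof τ))
    (hx1 : HasDerivAt x1 (p1 (tof τ) / M1 m) (tof τ))
    (hp0 : HasDerivAt p0 (-(deriv (fun y => i3bpPot m y (x1 (tof τ))) (x0 (tof τ)))) (tof τ))
    (hp1 : HasDerivAt p1 (-(deriv (fun y => i3bpPot m (x0 (tof τ)) y) (x1 (tof τ)))) (tof τ))
    (ht : HasDerivAt tof ((bR m (x0 (tof τ)) (x1 (tof τ))) ^ ((3:ℝ)/2)) τ) :
      HasDerivAt (fun s => bR m (x0 (tof s)) (x1 (tof s)))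
        (bR m (x0 (tof τ)) (x1 (tof τ))
          * bV m (x0 (tof τ)) (x1 (tof τ)) (p0 (tof τ)) (p1 (tof τ))) τ ∧
      HasDerivAt (fun s => bV m (x0 (tof s)) (x1 (tof s)) (p0 (tof s)) (p1 (tof s)))
        ((bW m (x0 (tof τ)) (x1 (tof τ)) (p0 (tof τ)) (p1 (tof τ)))^2
          + (bV m (x0 (tof τ)) (x1 (tof τ)) (p0 (tof τ)) (p1 (tof τ)))^2/2
          + Vbar m (bPsi m (x0 (tof τ)) (x1 (tof τ)))) τ ∧
      HasDerivAt (fun s => bPsi m (x0 (tof s)) (x1 (tof s)))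
        (bW m (x0 (tof τ)) (x1 (tof τ)) (p0 (tof τ)) (p1 (tof τ))) τ ∧
      HasDerivAt (fun s => bW m (x0 (tof s)) (x1 (tof s)) (p0 (tof s)) (p1 (tof s)))
        (-(1/2) * bV m (x0 (tof τ)) (x1 (tof τ)) (p0 (tof τ)) (p1 (tof τ))
            * bW m (x0 (tof τ)) (x1 (tof τ)) (p0 (tof τ)) (p1 (tof τ))
          - deriv (Vbar m) (bPsi m (x0 (tof τ)) (x1 (tof τ)))) τ := by
  have hM1 : 0 < M1 m := by unfold M1; positivity
  obtain ⟨a, ha, haM⟩ : ∃ a : ℝ, 0 < a ∧ Real.sqrt (M1 m) = a := ⟨_, Real.sqrt_pos.2 hM1, rfl⟩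
  obtain ⟨b, hb, hb2⟩ : ∃ b : ℝ, 0 < b ∧ Real.sqrt 2 = b := ⟨_, by positivity, rfl⟩
  have hbb : b^2 = 2 := by rw [← hb2]; exact Real.sq_sqrt (by norm_num)
  have haa : M1 m = a^2 := by rw [← haM]; exact (Real.sq_sqrt hM1.le).symm
  have ham : a^2*(m+2) = 2*m := by rw [← haa]; unfold M1; field_simp
  have hM0 : M0 = 1/b^2 := by rw [hbb]; rfl
  have hsM0 : Real.sqrt M0 = 1/b := by
    rw [hM0, show 1/b^2 = (1/b)^2 by ring]; exact Real.sqrt_sq (by positivity)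
  have hs01 : Real.sqrt (M0 / M1 m) = 1/(a*b) := by
    rw [hM0, haa, show 1/b^2/a^2 = (1/(a*b))^2 by field_simp]; exact Real.sqrt_sq (by positivity)
  have hs10 : Real.sqrt (M1 m / M0) = a*b := by
    rw [hM0, haa, show a^2/(1/b^2) = (a*b)^2 by field_simp]; exact Real.sqrt_sq (by positivity)
  rw [(aux_pot0 m _ _ hpos).deriv] at hp0
  rw [(aux_pot1 m _ _ hpos).deriv] at hp1
  have hrad : 0 < M0*(x0 (tof τ))^2 + M1 m*(x1 (tof τ))^2 := by
    have : 0 < M0 := by unfold M0; norm_num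
    positivity
  have hbRpos : 0 < bR m (x0 (tof τ)) (x1 (tof τ)) := Real.sqrt_pos.2 hrad
  obtain ⟨q, hq, hqR⟩ : ∃ q : ℝ, 0 < q ∧ Real.sqrt (bR m (x0 (tof τ)) (x1 (tof τ))) = q :=
    ⟨_, Real.sqrt_pos.2 hbRpos, rfl⟩
  have hR : bR m (x0 (tof τ)) (x1 (tof τ)) = q^2 := by
    rw [← hqR]; exact (Real.sq_sqrt hbRpos.le).symm
  have hq4 : q^4 = (x0 (tof τ))^2/b^2 + a^2*(x1 (tof τ))^2 := by
    have h := Real.sq_sqrt hrad.le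
    change (bR m (x0 (tof τ)) (x1 (tof τ)))^2 = _ at h
    rw [hR, hM0, haa] at h
    rw [show q^4 = (q^2)^2 by ring, h]; ring
  rw [aux_rpow_three_half hbRpos.le, hqR] at ht
  have hDpos : 0 < (x1 (tof τ))^2 + (x0 (tof τ))^2/4 := by positivity
  obtain ⟨D, hD, hDe⟩ : ∃ D : ℝ, 0 < D ∧
    Real.sqrt ((x1 (tof τ))^2 + (x0 (tof τ))^2/4) = D := ⟨_, Real.sqrt_pos.2 hDpos, rfl⟩
  have hDD : D^2 = (x1 (tof τ))^2 + (x0 (tof τ))^2/4 := by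
    rw [← hDe]; exact Real.sq_sqrt hDpos.le
  rw [hDe] at hp0 hp1
  rw [hM0] at hx0
  rw [haa] at hx1
  have kx0 := hx0.comp τ ht
  have kx1 := hx1.comp τ ht
  have kp0 := hp0.comp τ ht
  have kp1 := hp1.comp τ ht
  -- values
  have hV : ∀ y0 y1 z0 z1, bV m y0 y1 z0 z1 = (y0*z0+y1*z1) / Real.sqrt (bR m y0 y1) := by
    intro y0 y1 z0 z1
    rw [bV, aux_rpow_neg_half (r := bR m y0 y1) (Real.sqrt_nonneg _)]; ring
  have hW : ∀ y0 y1 z0 z1, bW m y0 y1 z0 z1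
      = (1/(a*b)*(y0*z1)- a*b*(y1*z0)) / Real.sqrt (bR m y0 y1) := by
    intro y0 y1 z0 z1
    rw [bW, aux_rpow_neg_half (r := bR m y0 y1) (Real.sqrt_nonneg _), hs01, hs10]; ring
  have hsq : Real.sqrt (1 + (Real.sqrt (M1 m) * x1 (tof τ) / (Real.sqrt M0 * x0 (tof τ)))^2)
      = b*q^2/x0 (tof τ) := by
    rw [haM, hsM0, show 1 + (a * x1 (tof τ) / (1/b * x0 (tof τ)))^2 = (b*q^2/x0 (tof τ))^2 by
      rw [show (b*q^2/x0 (tof τ))^2 = b^2*q^4/x0 (tof τ)^2 by ring, hq4]; field_simp]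
    exact Real.sqrt_sq (by positivity)
  have hcos : Real.cos (bPsi m (x0 (tof τ)) (x1 (tof τ))) = x0 (tof τ)/(b*q^2) := by
    rw [bPsi, Real.cos_arctan, hsq]; field_simp
  have hsin : Real.sin (bPsi m (x0 (tof τ)) (x1 (tof τ))) = a*x1 (tof τ)/q^2 := by
    rw [bPsi, Real.sin_arctan, hsq, haM, hsM0]; field_simp
  have hcpos : 0 < Real.cos (bPsi m (x0 (tof τ)) (x1 (tof τ))) := by rw [hcos]; positivity
  have hk : (2*(2+m)/m) = 4/a^2 := by
    field_simp; linarith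
  have hE : Real.sqrt (2*Real.cos (bPsi m (x0 (tof τ)) (x1 (tof τ)))^2
      + (2*(2+m)/m)*Real.sin (bPsi m (x0 (tof τ)) (x1 (tof τ)))^2) = 2*D/q^2 := by
    rw [hcos, hsin, hk, show 2 * (x0 (tof τ)/(b*q^2))^2 + 4/a^2*(a*x1 (tof τ)/q^2)^2
        = (2*D/q^2)^2 by
      rw [show (2*D/q^2)^2 = 4*D^2/q^4 by ring, hDD, show (x0 (tof τ)/(b*q^2))^2
        = x0 (tof τ)^2/(b^2*q^4) by ring, hbb]; field_simp; ring]
    exact Real.sqrt_sq (by positivity)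
  have kR : HasDerivAt (fun s => bR m (x0 (tof s)) (x1 (tof s)))
      (q*(x0 (tof τ) * p0 (tof τ) + x1 (tof τ) * p1 (tof τ))) τ := by
    have h := (((kx0.pow 2).const_mul M0).add ((kx1.pow 2).const_mul (M1 m))).sqrt
      (by simpa using hrad.ne')
    refine h.congr_deriv ?_
    have hR' := hR
    unfold bR at hR'
    simp only [Pi.add_apply, Pi.pow_apply, Function.comp]
    rw [hR', hM0, haa]
    field_simp
    try ring
  have kS := kR.sqrt hbRpos.ne'
  rw [hqR] at kS
  have hq0 : Real.sqrt (bR m (x0 (tof τ)) (x1 (tof τ))) ≠ 0 := by rw [hqR]; exact hq.ne'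
  have kV := ((kx0.mul kp0).add (kx1.mul kp1)).div kS hq0
  have kW := (((kx0.mul kp1).const_mul (1/(a*b))).sub
    ((kx1.mul kp0).const_mul (a*b))).div kS hq0
  simp only [Function.comp, Pi.add_apply, Pi.mul_apply, Pi.sub_apply, hqR] at kV kW
  refine ⟨?_, ?_, ?_, ?_⟩
  · refine kR.congr_deriv ?_
    rw [hV, hqR, hR]; field_simp
  · simp only [hV, hW]
    refine kV.congr_deriv ?_
    rw [Vbar, hE, hcos, hqR, hb2]
    generalize x0 (tof τ) = X at *
    generalize x1 (tof τ) = Y at *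
    generalize p0 (tof τ) = P at *
    generalize p1 (tof τ) = Q at *
    have e1 : X*(1/X^2 + 2*m*(X/4)/D^3) + Y*(2*m*Y/D^3) = 1/X + 2*m/D := by
      rw [show 2*m/D = 2*m*D^2/D^3 by field_simp, hDD]; field_simp; ring
    have e2 : q^4*(b^2*P^2 + Q^2/a^2) = (1/(a*b)*(X*Q) - a*b*(Y*P))^2 + (X*P+Y*Q)^2 := by
      rw [hq4]; field_simp; ring
    have e3 : (1/(a*b)*(X*Q) - a*b*(Y*P))^2 = q^4*(b^2*P^2 + Q^2/a^2) - (X*P+Y*Q)^2 := by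
      linarith
    rw [div_pow (1/(a*b)*(X*Q) - a*b*(Y*P)), e3]
    have e4 : -1/(b*(X/(b*q^2))) - 4*m/(2*D/q^2) = -q^2*(1/X+2*m/D) := by field_simp; ring
    rw [e4, ← e1]
    clear e1 e2 e3 e4
    field_simp
    ring
  · have hX : Real.sqrt M0 * x0 (tof τ) ≠ 0 := by rw [hsM0]; positivity
    have h := ((kx1.const_mul (Real.sqrt (M1 m))).div (kx0.const_mul (Real.sqrt M0)) hX).arctan
    refine h.congr_deriv ?_
    rw [hW, hqR]
    simp only [Function.comp, Pi.div_apply, haM, hsM0]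
    generalize x0 (tof τ) = X at *
    generalize x1 (tof τ) = Y at *
    generalize p0 (tof τ) = P at *
    generalize p1 (tof τ) = Q at *
    have : 1 + (a*Y/(1/b*X))^2 = b^2*q^4/X^2 := by rw [hq4]; field_simp
    rw [this]
    field_simp
    try ring
  · simp only [hV, hW]
    refine kW.congr_deriv ?_
    rw [(aux_Vbar m _ hm hcpos).deriv, hE, hcos, hsin, hqR, hb2, hk]
    generalize x0 (tof τ) = X at *
    generalize x1 (tof τ) = Y at *
    generalize p0 (tof τ) = P at *
    generalize p1 (tof τ) = Q at *
    have e1 : a*b/2 = a/b := by field_simp; linarith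
    have e2 : -(1/(a*b)*(X*(2*m*Y/D^3))) + a*b*(Y*(1/X^2 + 2*m*(X/4)/D^3))
        = a*b*Y/X^2 + m*X*Y/D^3*(-2/(a*b) + a*b/2) := by field_simp; ring
    rw [e1] at e2
    have e3 : (-(a*Y/q^2)/(b*(X/(b*q^2))^2)
        + 4*m*(4/a^2-2)*(a*Y/q^2)*(X/(b*q^2))/(2*D/q^2)^3)
        = -q^2*(-(1/(a*b)*(X*(2*m*Y/D^3))) + a*b*(Y*(1/X^2 + 2*m*(X/4)/D^3))) := by
      rw [e2]; field_simp; ring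
    rw [e3]
    clear e1 e2 e3
    field_simp
    ring

/-- Under the time reparametrization `dt/dτ = r^{3/2}`, the blowup variables of a solution
of the isosceles three-body problem satisfy Devaney's blown-up equations
`r' = rv`, `v' = w² + v²/2 + V̄(ψ)`, `ψ' = w`, `w' = -(1/2)vw - V̄'(ψ)`. -/
theorem statement8 (m : ℝ) (hm : 0 < m) (x0 x1 p0 p1 : ℝ → ℝ)
    (I : Set ℝ) (hI : IsOpen I) (hx0 : ∀ t ∈ I, 0 < x0 t)
    (hsol : IsI3BPSolutionOn m x0 x1 p0 p1 I)
    (tof : ℝ → ℝ) (J : Set ℝ) (hJ : IsOpen J) (hmaps : ∀ τ ∈ J, tof τ ∈ I)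
    (htof : ∀ τ ∈ J,
      HasDerivAt tof ((bR m (x0 (tof τ)) (x1 (tof τ))) ^ ((3:ℝ)/2)) τ) :
    ∀ τ ∈ J,
      HasDerivAt (fun s => bR m (x0 (tof s)) (x1 (tof s)))
        (bR m (x0 (tof τ)) (x1 (tof τ))
          * bV m (x0 (tof τ)) (x1 (tof τ)) (p0 (tof τ)) (p1 (tof τ))) τ ∧
      HasDerivAt (fun s => bV m (x0 (tof s)) (x1 (tof s)) (p0 (tof s)) (p1 (tof s)))
        ((bW m (x0 (tof τ)) (x1 (tof τ)) (p0 (tof τ)) (p1 (tof τ)))^2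
          + (bV m (x0 (tof τ)) (x1 (tof τ)) (p0 (tof τ)) (p1 (tof τ)))^2/2
          + Vbar m (bPsi m (x0 (tof τ)) (x1 (tof τ)))) τ ∧
      HasDerivAt (fun s => bPsi m (x0 (tof s)) (x1 (tof s)))
        (bW m (x0 (tof τ)) (x1 (tof τ)) (p0 (tof τ)) (p1 (tof τ))) τ ∧
      HasDerivAt (fun s => bW m (x0 (tof s)) (x1 (tof s)) (p0 (tof s)) (p1 (tof s)))
        (-(1/2) * bV m (x0 (tof τ)) (x1 (tof τ)) (p0 (tof τ)) (p1 (tof τ))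
            * bW m (x0 (tof τ)) (x1 (tof τ)) (p0 (tof τ)) (p1 (tof τ))
          - deriv (Vbar m) (bPsi m (x0 (tof τ)) (x1 (tof τ)))) τ := by
  intro τ hτ
  obtain ⟨h0, h1, h2, h3⟩ := hsol _ (hmaps τ hτ)
  exact aux_main m hm x0 x1 p0 p1 tof τ (hx0 _ (hmaps τ hτ)) h0 h1 h2 h3 (htof τ hτ)
end

section
/- Let m > 0 and V̄(ψ) = −1/(√2 cos ψ) − 4m/√(2cos²ψ + (2(2+m)/m) sin²ψ), defined for ψ ∈ (−π/2, π/2). Then the functions ψ ↦ V̄(ψ) cos ψ and ψ ↦ V̄′(ψ) cos²ψ extend to real-analytic functions on all of ℝ; explicitly, V̄(ψ)cos ψ = −1/√2 − 4m cos ψ·D(ψ)^{−1/2} and V̄′(ψ)cos²ψ = −sin ψ/√2 + 16 sin ψ cos³ψ·D(ψ)^{−3/2}, where D(ψ) = 2cos²ψ + (2(2+m)/m) sin²ψ > 0 for all ψ. Consequently, the right-hand side of the regularized blown-up isosceles system (dr/dτ̂ = r v cos ψ; dv/dτ̂ = (2rE − v²/2 − V̄(ψ)) cos ψ; dψ/dτ̂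 = ŵ; dŵ/dτ̂ = −(1/2) v ŵ cos ψ − V̄′(ψ) cos²ψ − sin ψ cos ψ (2rE − v² − 2V̄(ψ))) is a real-analytic vector field on [0,∞) × ℝ × [−π/2, π/2] × ℝ, i.e. the double collision ψ = ±π/2 of the binary is regularized. -/
open Filter Set Topology

/-- Regularization of double collisions: `V̄(ψ)cos ψ` and `V̄′(ψ)cos²ψ` extend to
real-analytic functions of `ψ` on all of `ℝ`, with the stated explicit formulas, and
consequently the right-hand side of the regularized blown-up isosceles system is a
real-analytic vector field on `[0,∞) × ℝ × [-π/2, π/2] × ℝ`. -/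
theorem statement9 (m : ℝ) (hm : 0 < m) (E : ℝ) :
    let D : ℝ → ℝ := fun ψ => 2*Real.cos ψ^2 + (2*(2+m)/m)*Real.sin ψ^2
    let g₁ : ℝ → ℝ := fun ψ => -1/Real.sqrt 2 - 4*m*Real.cos ψ/Real.sqrt (D ψ)
    let g₂ : ℝ → ℝ := fun ψ =>
      -Real.sin ψ/Real.sqrt 2 + 16*Real.sin ψ*Real.cos ψ^3/(Real.sqrt (D ψ))^3
    let F : ℝ × ℝ × ℝ × ℝ → ℝ × ℝ × ℝ × ℝ := fun p =>
      (p.1 * p.2.1 * Real.cos p.2.2.1,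
       (2*p.1*E - p.2.1^2/2)*Real.cos p.2.2.1 - g₁ p.2.2.1,
       p.2.2.2,
       -(1/2)*p.2.1*p.2.2.2*Real.cos p.2.2.1 - g₂ p.2.2.1
         - Real.sin p.2.2.1 * Real.cos p.2.2.1 * (2*p.1*E - p.2.1^2)
         + 2*Real.sin p.2.2.1 * g₁ p.2.2.1)
    (∀ ψ : ℝ, 0 < D ψ) ∧
    (∀ ψ ∈ Ioo (-(Real.pi/2)) (Real.pi/2),
      Vbar m ψ * Real.cos ψ = g₁ ψ ∧ deriv (Vbar m) ψ * Real.cos ψ^2 = g₂ ψ) ∧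
    (∀ ψ : ℝ, AnalyticAt ℝ g₁ ψ ∧ AnalyticAt ℝ g₂ ψ) ∧
    (∀ r v ψ w : ℝ, 0 ≤ r → ψ ∈ Icc (-(Real.pi/2)) (Real.pi/2) →
      AnalyticAt ℝ F (r, v, ψ, w)) ∧
    -- F agrees with the right-hand side of the regularized blown-up system where V̄ is defined
    (∀ r v ψ w : ℝ, ψ ∈ Ioo (-(Real.pi/2)) (Real.pi/2) →
      F (r, v, ψ, w) =
        (r*v*Real.cos ψ,
         (2*r*E - v^2/2 - Vbar m ψ)*Real.cos ψ,
         w,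
         -(1/2)*v*w*Real.cos ψ - deriv (Vbar m) ψ * Real.cos ψ^2
           - Real.sin ψ * Real.cos ψ * (2*r*E - v^2 - 2*Vbar m ψ))) := by
  intro D g₁ g₂ F
  have hD : ∀ ψ : ℝ, 0 < D ψ := by
    intro ψ
    have h1 : D ψ = 2 + (4/m) * Real.sin ψ^2 := by
      simp only [D]
      rw [Real.cos_sq']
      field_simp
      ring
    rw [h1]
    positivity
  have hg : ∀ ψ ∈ Ioo (-(Real.pi/2)) (Real.pi/2),
      Vbar m ψ * Real.cos ψ = g₁ ψ ∧ deriv (Vbar m) ψ * Real.cos ψ^2 = g₂ ψ := by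
    intro ψ hψ
    have hc : Real.cos ψ ≠ 0 := (Real.cos_pos_of_mem_Ioo hψ).ne'
    have h2 : Real.sqrt 2 ≠ 0 := by positivity
    have hs : Real.sqrt (D ψ) ≠ 0 := (Real.sqrt_pos.2 (hD ψ)).ne'
    constructor
    · change (-1/(Real.sqrt 2 * Real.cos ψ) - 4*m/Real.sqrt (D ψ)) * Real.cos ψ
        = -1/Real.sqrt 2 - 4*m*Real.cos ψ/Real.sqrt (D ψ)
      field_simp
    · have hDd : HasDerivAt D (8 / m * (Real.sin ψ * Real.cos ψ)) ψ := by
        have := (((Real.hasDerivAt_cos ψ).pow 2).const_mul 2).add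
          (((Real.hasDerivAt_sin ψ).pow 2).const_mul (2*(2+m)/m))
        refine this.congr_deriv ?_
        field_simp
        ring
      have hsd := hDd.sqrt (hD ψ).ne'
      have hV : HasDerivAt (Vbar m) _ ψ :=
        ((hasDerivAt_const ψ (-1:ℝ)).div ((Real.hasDerivAt_cos ψ).const_mul (Real.sqrt 2))
          (mul_ne_zero h2 hc)).sub ((hasDerivAt_const ψ (4*m)).div hsd hs)
      rw [hV.deriv]
      change ((0 * (√2 * Real.cos ψ) - -1 * (√2 * -Real.sin ψ)) / (√2 * Real.cos ψ) ^ 2 -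
        (0 * √(D ψ) - 4 * m * (8 / m * (Real.sin ψ * Real.cos ψ) / (2 * √(D ψ)))) /
          √(D ψ) ^ 2) * Real.cos ψ ^ 2 = -Real.sin ψ/Real.sqrt 2 + 16*Real.sin ψ*Real.cos ψ^3/(Real.sqrt (D ψ))^3
      field_simp
      ring
  have hsA : ∀ ψ : ℝ, AnalyticAt ℝ (fun x => Real.sqrt (D x)) ψ := by
    intro ψ
    have h1 : AnalyticAt ℝ Real.sqrt (D ψ) :=
      (Real.contDiffAt_sqrt (n := ⊤) (hD ψ).ne').analyticAt
    have h2 : AnalyticAt ℝ D ψ := by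
      simp only [D]
      fun_prop
    exact h1.comp h2
  have hA : ∀ ψ : ℝ, AnalyticAt ℝ g₁ ψ ∧ AnalyticAt ℝ g₂ ψ := by
    intro ψ
    have hs : Real.sqrt (D ψ) ≠ 0 := (Real.sqrt_pos.2 (hD ψ)).ne'
    constructor
    · exact analyticAt_const.sub
        ((analyticAt_const.mul Real.analyticAt_cos).div (hsA ψ) hs)
    · exact (Real.analyticAt_sin.neg.div analyticAt_const (by positivity)).add
        (((analyticAt_const.mul Real.analyticAt_sin).mul (Real.analyticAt_cos.pow 3)).div
          ((hsA ψ).pow 3) (pow_ne_zero 3 hs))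
  refine ⟨hD, hg, hA, ?_, ?_⟩
  · intro r v ψ w _ _
    have hp : AnalyticAt ℝ (fun p : ℝ × ℝ × ℝ × ℝ => p.2.2.1) (r, v, ψ, w) :=
      AnalyticAt.fun_comp analyticAt_fst (AnalyticAt.fun_comp analyticAt_snd analyticAt_snd)
    have h1 : AnalyticAt ℝ (fun p : ℝ × ℝ × ℝ × ℝ => g₁ p.2.2.1) (r, v, ψ, w) :=
      AnalyticAt.fun_comp (hA ψ).1 hp
    have h2 : AnalyticAt ℝ (fun p : ℝ × ℝ × ℝ × ℝ => g₂ p.2.2.1) (r, v, ψ, w) :=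
      AnalyticAt.fun_comp (hA ψ).2 hp
    have hc : AnalyticAt ℝ (fun p : ℝ × ℝ × ℝ × ℝ => Real.cos p.2.2.1) (r, v, ψ, w) :=
      AnalyticAt.fun_comp Real.analyticAt_cos hp
    have hs : AnalyticAt ℝ (fun p : ℝ × ℝ × ℝ × ℝ => Real.sin p.2.2.1) (r, v, ψ, w) :=
      AnalyticAt.fun_comp Real.analyticAt_sin hp
    clear_value g₁ g₂
    have q1 : AnalyticAt ℝ (fun p : ℝ × ℝ × ℝ × ℝ => p.1) (r, v, ψ, w) :=
      analyticAt_fst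
    have q2 : AnalyticAt ℝ (fun p : ℝ × ℝ × ℝ × ℝ => p.2.1) (r, v, ψ, w) :=
      AnalyticAt.fun_comp analyticAt_fst analyticAt_snd
    have q4 : AnalyticAt ℝ (fun p : ℝ × ℝ × ℝ × ℝ => p.2.2.2) (r, v, ψ, w) :=
      AnalyticAt.fun_comp analyticAt_snd (AnalyticAt.fun_comp analyticAt_snd analyticAt_snd)
    have qq : AnalyticAt ℝ (fun p : ℝ × ℝ × ℝ × ℝ => 2*p.1*E) (r, v, ψ, w) :=
      (analyticAt_const.mul q1).mul analyticAt_const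
    refine ((q1.mul q2).mul hc).prod (AnalyticAt.prod ?_ (q4.prod ?_))
    · exact ((qq.sub ((q2.pow 2).div analyticAt_const two_ne_zero)).mul hc).sub h1
    · exact (((((analyticAt_const.mul q2).mul q4).mul hc).sub h2).sub
        ((hs.mul hc).mul (qq.sub (q2.pow 2)))).add ((analyticAt_const.mul hs).mul h1)
  · intro r v ψ w hψ
    obtain ⟨e1, e2⟩ := hg ψ hψ
    simp only [F, ← e1, ← e2, Prod.mk.injEq, true_and]
    constructor <;> ring
end

section
/- Fix m > 0 and E ∈ ℝ. Along any solution (r, v, ψ, ŵ)(τ̂) of the regularized blown-up isosceles system with ψ(τ̂) ∈ (−π/2, π/2), the quantity Φ = ŵ²/(2cos²ψ) + v²/2 + V̄(ψ) − rE has the following property: if Φ = 0 at some time τ̂₀, then Φ = 0 for all times; i.e. the energy relation rE = ŵ²/(2cos²ψ) + v²/2 + V̄(ψ) defines an invariant set of the regularized flow. -/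
open Filter Set Topology

/-- `(r, v, ψ, w)` solves the regularized blown-up isosceles equations (with `ŵ = w cos ψ`
and time `τ̂`, `dτ/dτ̂ = cos ψ`) on the set `s`. -/
def IsRegularizedSolutionOn (m E : ℝ) (r v ψ w : ℝ → ℝ) (s : Set ℝ) : Prop :=
  ∀ τ ∈ s,
    HasDerivAt r (r τ * v τ * Real.cos (ψ τ)) τ ∧
    HasDerivAt v ((2*r τ*E - (v τ)^2/2 - Vbar m (ψ τ)) * Real.cos (ψ τ)) τ ∧
    HasDerivAt ψ (w τ) τ ∧
    HasDerivAt w (-(1/2)*v τ*w τ*Real.cos (ψ τ)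
      - deriv (Vbar m) (ψ τ) * Real.cos (ψ τ)^2
      - Real.sin (ψ τ) * Real.cos (ψ τ) * (2*r τ*E - (v τ)^2 - 2*Vbar m (ψ τ))) τ

/-- The energy relation `rE = ŵ²/(2cos²ψ) + v²/2 + V̄(ψ)` defines an invariant set of the
regularized flow: if the quantity `Φ` vanishes at one time it vanishes at all times. -/
theorem statement10 (m E : ℝ) (hm : 0 < m) (r v ψ w : ℝ → ℝ) (I : Set ℝ)
    (hIo : IsOpen I) (hIc : IsPreconnected I)
    (hψ : ∀ τ ∈ I, ψ τ ∈ Ioo (-(Real.pi/2)) (Real.pi/2))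
    (hsol : IsRegularizedSolutionOn m E r v ψ w I)
    (τ₀ : ℝ) (hτ₀ : τ₀ ∈ I)
    (h0 : (w τ₀)^2/(2*Real.cos (ψ τ₀)^2) + (v τ₀)^2/2 + Vbar m (ψ τ₀) - r τ₀ * E = 0) :
    ∀ τ ∈ I, (w τ)^2/(2*Real.cos (ψ τ)^2) + (v τ)^2/2 + Vbar m (ψ τ) - r τ * E = 0 := by
  have hc : ∀ τ ∈ I, 0 < Real.cos (ψ τ) := fun τ hτ => Real.cos_pos_of_mem_Ioo (hψ τ hτ)
  have hV : ∀ τ ∈ I, DifferentiableAt ℝ (Vbar m) (ψ τ) := by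
    intro τ hτ
    have h1 := hc τ hτ
    have h2 : 0 < 2*Real.cos (ψ τ)^2 + (2*(2+m)/m)*Real.sin (ψ τ)^2 := by positivity
    have h3 : Real.sqrt 2 * Real.cos (ψ τ) ≠ 0 := by positivity
    have h4 := (Real.sqrt_pos.mpr h2).ne'
    unfold Vbar
    have hd : DifferentiableAt ℝ
        (fun x => 2*Real.cos x^2 + (2*(2+m)/m)*Real.sin x^2) (ψ τ) := by fun_prop
    have hd1 : DifferentiableAt ℝ (fun x => Real.sqrt 2 * Real.cos x) (ψ τ) := by fun_prop
    exact ((differentiableAt_const _).div hd1 h3).sub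
      ((differentiableAt_const _).div (hd.sqrt h2.ne') h4)
  set Φ : ℝ → ℝ := fun τ =>
    (w τ)^2/(2*Real.cos (ψ τ)^2) + (v τ)^2/2 + Vbar m (ψ τ) - r τ * E with hΦ
  set a : ℝ → ℝ := fun τ =>
    -(v τ * Real.cos (ψ τ)) + 2 * Real.sin (ψ τ) * w τ / Real.cos (ψ τ) with ha
  have hder : ∀ τ ∈ I, HasDerivAt Φ (a τ * Φ τ) τ := by
    intro τ hτ
    obtain ⟨hr, hv, hp, hw⟩ := hsol τ hτ
    have h1 := (hc τ hτ).ne'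
    have hVd := (hV τ hτ).hasDerivAt.comp τ hp
    have hcos := ((hp.cos).pow 2).const_mul 2
    have hq := (hw.pow 2).div hcos (by simpa using h1)
    have := ((hq.add ((hv.pow 2).div_const 2)).add hVd).sub (hr.mul_const E)
    refine this.congr_deriv ?_
    simp only [hΦ, ha, Pi.pow_apply]
    field_simp
    ring
  have hacont : ContinuousOn a I := by
    intro τ hτ
    obtain ⟨hr, hv, hp, hw⟩ := hsol τ hτ
    have h1 := (hc τ hτ).ne'
    have hv := hv.continuousAt
    have hp := hp.continuousAt
    have hw := hw.continuousAt
    have hcc : ContinuousAt (fun t => Real.cos (ψ t)) τ := Real.continuous_cos.continuousAt.comp hp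
    have hss : ContinuousAt (fun t => Real.sin (ψ t)) τ := Real.continuous_sin.continuousAt.comp hp
    exact (((hv.mul hcc).neg).add
      (((continuousAt_const.mul hss).mul hw).div hcc h1)).continuousWithinAt
  have hA : ∀ τ ∈ I, HasDerivAt (fun t => ∫ x in τ₀..t, a x) (a τ) τ := by
    intro τ hτ
    have hsub : uIcc τ₀ τ ⊆ I := hIc.ordConnected.uIcc_subset hτ₀ hτ
    exact intervalIntegral.integral_hasDerivAt_right
      ((hacont.mono hsub).intervalIntegrable)
      (hacont.stronglyMeasurableAtFilter hIo τ hτ)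
      (hacont.continuousAt (hIo.mem_nhds hτ))
  have hG : ∀ τ ∈ I, HasDerivAt (fun t => Φ t * Real.exp (-∫ x in τ₀..t, a x)) 0 τ := by
    intro τ hτ
    refine ((hder τ hτ).mul ((hA τ hτ).neg.exp)).congr_deriv ?_
    simp only [Pi.neg_apply]
    ring
  intro τ hτ
  have hconst := hIo.is_const_of_deriv_eq_zero hIc
    (fun t ht => (hG t ht).differentiableAt.differentiableWithinAt)
    (fun t ht => (hG t ht).deriv) hτ hτ₀
  have h0' : Φ τ₀ = 0 := h0
  simp only [h0', zero_mul] at hconst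
  exact (mul_eq_zero.mp hconst).resolve_right (Real.exp_pos _).ne'
end

section
/- Let m > 0, M₀ = 1/2, M₁ = 2m/(m+2), and for ψ ∈ (0, π/2) and θ ∈ ℝ define F(ψ,θ) = −Σ_{i∈{0,1}} m (sin²ψ/M₁ + cos²ψ/(4M₀) + (−1)^i (sin ψ cos ψ/√(M₀M₁)) cos θ)^{−1/2} − √M₀/cos ψ (this is the rescaled potential r·V of the three-body problem in polar blowup variables, with θ = θ₀ − θ₁ the relative polar angle). Then ∂²F/∂θ² evaluated at θ = π/2 equals −(3m/2)(M₁M₀)^{−1} sin²ψ cos²ψ / (M₁^{−1} sin²ψ + cos²ψ/(4M₀))^{5/2}, which is strictly negative for every ψ ∈ (0, π/2); moreover ∂F/∂θ vanishes at θ = π/2. -/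
open Filter Set Topology

lemma aux_pow (A B : ℝ) (p x : ℝ) (h : 0 < A + B * Real.cos x) :
    HasDerivAt (fun θ => (A + B * Real.cos θ) ^ p)
      (-(B * Real.sin x) * p * (A + B * Real.cos x) ^ (p - 1)) x := by
  have h1 : HasDerivAt (fun θ => A + B * Real.cos θ) (-(B * Real.sin x)) x := by
    have := ((Real.hasDerivAt_cos x).const_mul B).const_add A
    refine this.congr_deriv ?_
    ring
  exact h1.rpow_const (Or.inl h.ne')

lemma aux_ev (A B : ℝ) (hA : 0 < A) :
    ∀ᶠ x in 𝓝 (Real.pi / 2), 0 < A + B * Real.cos x := by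
  have hc : ContinuousAt (fun x => A + B * Real.cos x) (Real.pi / 2) := by fun_prop
  apply hc.eventually_const_lt
  simpa using hA

lemma aux_sqrt (m y : ℝ) (hy : 0 < y) : m / Real.sqrt y = m * y ^ (-(1/2) : ℝ) := by
  rw [Real.sqrt_eq_rpow, Real.rpow_neg hy.le, div_eq_mul_inv]

lemma aux_main_s18 (m A B C : ℝ) (hA : 0 < A) (G : ℝ → ℝ)
    (hG : ∀ x, G x = -(m / Real.sqrt (A + B * Real.cos x)
      + m / Real.sqrt (A + (-B) * Real.cos x)) - C) :
    deriv G (Real.pi / 2) = 0 ∧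
    deriv (deriv G) (Real.pi / 2) = -(3 * m / 2) * B ^ 2 / A ^ ((5:ℝ)/2) := by
  let D : ℝ → ℝ := fun x => -(m * (B / 2)) * (Real.sin x *
    ((A + B * Real.cos x) ^ (-(3/2) : ℝ) - (A + (-B) * Real.cos x) ^ (-(3/2) : ℝ)))
  have hev : G =ᶠ[𝓝 (Real.pi / 2)] fun x => -(m * (A + B * Real.cos x) ^ (-(1/2) : ℝ)
      + m * (A + (-B) * Real.cos x) ^ (-(1/2) : ℝ)) - C := by
    filter_upwards [aux_ev A B hA, aux_ev A (-B) hA] with x h1 h2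
    rw [hG, aux_sqrt m _ h1, aux_sqrt m _ h2]
  have hD : deriv G =ᶠ[𝓝 (Real.pi / 2)] D := by
    filter_upwards [hev.eventuallyEq_nhds, aux_ev A B hA, aux_ev A (-B) hA] with x h0 h1 h2
    rw [h0.deriv_eq]
    have := ((((aux_pow A B (-(1/2)) x h1).const_mul m).add
      ((aux_pow A (-B) (-(1/2)) x h2).const_mul m)).neg).sub_const C
    refine HasDerivAt.deriv (this.congr_deriv ?_)
    have e : (-(1/2) - 1 : ℝ) = -(3/2) := by norm_num
    simp only [D, e]
    ring
  refine ⟨by rw [hD.eq_of_nhds]; simp [D], ?_⟩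
  rw [hD.deriv_eq]
  have h1 : 0 < A + B * Real.cos (Real.pi / 2) := by simpa using hA
  have h2 : 0 < A + (-B) * Real.cos (Real.pi / 2) := by simpa using hA
  have := ((Real.hasDerivAt_sin (Real.pi / 2)).mul
    ((aux_pow A B (-(3/2)) _ h1).sub (aux_pow A (-B) (-(3/2)) _ h2))).const_mul (-(m * (B / 2)))
  refine HasDerivAt.deriv (this.congr_deriv ?_)
  have e : (-(3/2) - 1 : ℝ) = -(5/2) := by norm_num
  rw [e, Real.cos_pi_div_two, Real.sin_pi_div_two]
  simp only [mul_zero, add_zero, zero_mul, zero_add]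
  rw [Real.rpow_neg hA.le]
  ring

/-- The rescaled potential `r·V` of the three-body problem in Jacobi–polar blowup variables,
as a function of the relative polar angle `θ = θ₀ − θ₁`: its first `θ`-derivative vanishes
at the isosceles configuration `θ = π/2`, and its second `θ`-derivative there is strictly
negative, with the stated explicit value. -/
theorem statement18 (m : ℝ) (hm : 0 < m) (ψ : ℝ) (hψ : ψ ∈ Set.Ioo 0 (Real.pi/2)) :
    let M0 : ℝ := 1/2
    let M1 : ℝ := 2*m/(m+2)
    let F : ℝ → ℝ := fun θ =>
      -(∑ i ∈ Finset.range 2,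
          m / Real.sqrt (Real.sin ψ^2/M1 + Real.cos ψ^2/(4*M0)
            + (-1:ℝ)^i * (Real.sin ψ * Real.cos ψ / Real.sqrt (M0*M1)) * Real.cos θ))
        - Real.sqrt M0 / Real.cos ψ
    deriv F (Real.pi/2) = 0 ∧
    deriv (deriv F) (Real.pi/2)
      = -(3*m/2) * (1/(M1*M0)) * Real.sin ψ^2 * Real.cos ψ^2 /
          ((1/M1)*Real.sin ψ^2 + Real.cos ψ^2/(4*M0)) ^ ((5:ℝ)/2) ∧
    deriv (deriv F) (Real.pi/2) < 0 := by
  intro M0 M1 F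
  have hs : 0 < Real.sin ψ := Real.sin_pos_of_pos_of_lt_pi hψ.1 (by linarith [hψ.2, Real.pi_pos])
  have hc : 0 < Real.cos ψ := Real.cos_pos_of_mem_Ioo ⟨by linarith [hψ.1, Real.pi_pos], hψ.2⟩
  have hM0 : 0 < M0 := by norm_num [M0]
  have hM1 : 0 < M1 := by positivity
  have hA : 0 < Real.sin ψ^2/M1 + Real.cos ψ^2/(4*M0) := by positivity
  obtain ⟨h1, h2⟩ := aux_main_s18 m (Real.sin ψ^2/M1 + Real.cos ψ^2/(4*M0))
    (Real.sin ψ * Real.cos ψ / Real.sqrt (M0*M1)) (Real.sqrt M0 / Real.cos ψ) hA F (by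
      intro x
      simp only [F, Finset.sum_range_succ, Finset.sum_range_zero, pow_zero, pow_one, one_mul,
        zero_add, neg_mul])
  have h3 : deriv (deriv F) (Real.pi/2)
      = -(3*m/2) * (1/(M1*M0)) * Real.sin ψ^2 * Real.cos ψ^2 /
          ((1/M1)*Real.sin ψ^2 + Real.cos ψ^2/(4*M0)) ^ ((5:ℝ)/2) := by
    rw [h2, div_pow, Real.sq_sqrt (by positivity), one_div_mul_eq_div M1]
    ring
  refine ⟨h1, h3, ?_⟩
  rw [h2]
  have hp := Real.rpow_pos_of_pos hA ((5:ℝ)/2)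
  apply div_neg_of_neg_of_pos _ hp
  have : 0 < (Real.sin ψ * Real.cos ψ / Real.sqrt (M0*M1)) ^ 2 := by positivity
  nlinarith [mul_pos hm this]
end
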